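/- For every integer d ≥ 2 there is a constant c_d such that the following holds. For every finite set P of m points in ℝ^d and every real r with 1 ≤ r ≤ m, there exists a nonzero polynomial f ∈ ℝ[x₁,…,x_d] of degree at most c_d·r^{1/d} such that each connected component of ℝ^d \ Z(f) contains at most m/r points of P; moreover, the number of connected components of ℝ^d \ Z(f) is at most c_d·r. -/

import Mathlib

attribute [local instance] Classical.propDecidable

noncomputable section

/-- The real zero set of a polynomial in `d` variables. -/
def zeroSet {d : ℕ} (f : MvPolynomial (Fin d) ℝ) : Set (Fin d → ℝ) :=
  {x | MvPolynomial.eval x f = 0}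

open MvPolynomial

theorem pp_hasDerivAt {d : ℕ} (F : MvPolynomial (Fin d) ℝ) (z : Fin d → ℝ) (i : Fin d) :
    HasDerivAt (fun t : ℝ => eval (Function.update z i t) F) (eval z (pderiv i F)) (z i) := by
  induction F using MvPolynomial.induction_on with
  | C a => simpa using hasDerivAt_const (z i) a
  | add p q hp hq =>
    simp only [map_add]
    exact hp.add hq
  | mul_X p j hp =>
    have hX : HasDerivAt (fun t : ℝ => Function.update z i t j) (Pi.single (M := fun _ => ℝ) i 1 j) (z i) := by
      by_cases h : j = i
      · subst h; simp only [Function.update_self, Pi.single_eq_same]; exact hasDerivAt_id (z j)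
      · simpa [Function.update_of_ne h, Pi.single_eq_of_ne h] using hasDerivAt_const (z i) (z j)
    have := hp.mul hX
    simp only [Function.update_eq_self] at this
    have e : eval z (pderiv i (p * X j)) = (eval z) ((pderiv i) p) * z j + (eval z) p * Pi.single (M := fun _ => ℝ) i 1 j := by
      rw [Derivation.leibniz, pderiv_X]
      by_cases h : j = i
      · subst h; simp; ring
      · simp [Pi.single_eq_of_ne h]; ring
    rw [e]
    simp only [map_mul, eval_X]
    exact this

theorem pp_totalDegree_pderiv {d : ℕ} (F : MvPolynomial (Fin d) ℝ) (i : Fin d) :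
    (pderiv i F).totalDegree ≤ F.totalDegree := by
  rw [F.as_sum, map_sum]
  refine (totalDegree_finsetSum _ _).trans (Finset.sup_le fun s hs => ?_)
  rw [← F.as_sum, pderiv_monomial]
  refine (totalDegree_monomial_le _ _).trans ?_
  refine le_trans ?_ (le_totalDegree hs)
  change (s - Finsupp.single i 1).degree ≤ s.degree
  exact Finsupp.degree_mono tsub_le_self

/-- Easy Bezout. -/
theorem pp_bezout {d n : ℕ} (h : Fin d → MvPolynomial (Fin d) ℝ) (hh : ∀ i, (h i).totalDegree < n)
    (Z : Finset (Fin d → ℝ)) (hZ : ∀ z ∈ Z, ∀ i, z i ^ n = eval z (h i)) : Z.card ≤ n ^ d := by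
  classical
  let E : MvPolynomial (Fin d) ℝ →ₗ[ℝ] (Z → ℝ) := LinearMap.pi fun z => (aeval (R := ℝ) z.1).toLinearMap
  have hE : ∀ p z, E p z = eval z.1 p := fun p z => by simp [E]
  let b : (Fin d → Fin n) → (Z → ℝ) := fun a => E (monomial (Finsupp.equivFunOnFinite.symm fun i => (a i : ℕ)) 1)
  have hmon : ∀ N : ℕ, ∀ s : Fin d →₀ ℕ, s.degree = N → E (monomial s 1) ∈ Submodule.span ℝ (Set.range b) := by
    intro N
    induction N using Nat.strong_induction_on with
    | _ N ih =>
      intro s hs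
      by_cases hlt : ∀ i, s i < n
      · refine Submodule.subset_span ⟨fun i => ⟨s i, hlt i⟩, ?_⟩
        simp only [b]
        congr 3
        ext j; rfl
      · push Not at hlt
        obtain ⟨i, hi⟩ := hlt
        have hle : Finsupp.single i n ≤ s := by simpa using hi
        obtain ⟨s', rfl⟩ := le_iff_exists_add.mp hle
        have hEq : E (monomial (Finsupp.single i n + s') 1) = E (h i * monomial s' (1:ℝ)) := by
          ext z
          rw [hE, hE, map_mul, ← hZ z.1 z.2 i]
          rw [show (monomial (Finsupp.single i n + s') (1:ℝ)) = monomial (Finsupp.single i n) 1 * monomial s' 1 by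
            rw [monomial_mul, one_mul], map_mul]
          congr 1
          rw [← X_pow_eq_monomial]; simp
        rw [hEq, (h i * monomial s' (1:ℝ)).as_sum, map_sum]
        refine Submodule.sum_mem _ fun u hu => ?_
        have : monomial u (coeff u (h i * monomial s' (1:ℝ))) = coeff u (h i * monomial s' (1:ℝ)) • monomial u (1:ℝ) := by
          rw [smul_monomial]; simp
        rw [this, map_smul]
        refine Submodule.smul_mem _ _ (ih _ ?_ u rfl)
        have h1 : u.degree ≤ (h i * monomial s' (1:ℝ)).totalDegree := le_totalDegree hu
        have h2 := totalDegree_mul (h i) (monomial s' (1:ℝ))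
        have h3 : (monomial s' (1:ℝ)).totalDegree ≤ s'.degree := totalDegree_monomial_le _ _
        have h4 := hh i
        rw [← hs, map_add, Finsupp.degree_single]
        omega
  have hall : ∀ p, E p ∈ Submodule.span ℝ (Set.range b) := by
    intro p
    rw [p.as_sum, map_sum]
    refine Submodule.sum_mem _ fun u hu => ?_
    have : monomial u (coeff u p) = coeff u p • monomial u (1:ℝ) := by
      rw [smul_monomial]; simp
    rw [this, map_smul]
    exact Submodule.smul_mem _ _ (hmon _ u rfl)
  have hsurj : Function.Surjective E := by
    rw [← LinearMap.range_eq_top, eq_top_iff]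
    intro g _
    let L : Z → MvPolynomial (Fin d) ℝ := fun z => ∏ w ∈ Finset.univ.erase z, ∑ i, (X i - C (w.1 i)) * C (z.1 i - w.1 i)
    have hLne : ∀ z w : Z, w ≠ z → eval w.1 (L z) = 0 := by
      intro z w hw
      simp only [L, map_prod]
      refine Finset.prod_eq_zero (i := w) (by simp [hw]) ?_
      simp
    have hLself : ∀ z : Z, eval z.1 (L z) ≠ 0 := by
      intro z
      simp only [L, map_prod]
      refine Finset.prod_ne_zero_iff.mpr fun w hw => ?_
      simp only [map_sum, map_mul, map_sub, eval_X, eval_C]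
      intro h0
      rw [Finset.sum_eq_zero_iff_of_nonneg (fun i _ => mul_self_nonneg _)] at h0
      apply (Finset.mem_erase.mp hw).1
      ext i
      have := h0 i (Finset.mem_univ _)
      have := mul_self_eq_zero.mp this
      linarith
    refine ⟨∑ z, (g z / eval z.1 (L z)) • L z, ?_⟩
    ext w
    rw [hE, map_sum, Finset.sum_eq_single w]
    · rw [smul_eval, div_mul_cancel₀ _ (hLself w)]
    · intro z _ hz
      rw [smul_eval, hLne z w hz.symm, mul_zero]
    · simp
  have htop : Submodule.span ℝ (Set.range b) = ⊤ := by
    rw [eq_top_iff]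
    intro g _
    obtain ⟨p, rfl⟩ := hsurj g
    exact hall p
  have := finrank_range_le_card (R := ℝ) b
  rw [Set.finrank, htop, finrank_top] at this
  simpa using this

theorem pp_growth {d : ℕ} (f : MvPolynomial (Fin d) ℝ) :
    ∃ C : ℝ, 0 ≤ C ∧ ∀ x : Fin d → ℝ, 1 ≤ ‖x‖ → |eval x f| ≤ C * ‖x‖ ^ f.totalDegree := by
  refine ⟨∑ s ∈ f.support, |coeff s f|, Finset.sum_nonneg fun _ _ => abs_nonneg _, fun x hx => ?_⟩
  rw [eval_eq', Finset.sum_mul]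
  refine (Finset.abs_sum_le_sum_abs _ _).trans (Finset.sum_le_sum fun s hs => ?_)
  rw [abs_mul]
  refine mul_le_mul_of_nonneg_left ?_ (abs_nonneg _)
  rw [Finset.abs_prod]
  calc ∏ i, |x i ^ s i| ≤ ∏ i, ‖x‖ ^ s i := by
        refine Finset.prod_le_prod (fun _ _ => abs_nonneg _) fun i _ => ?_
        rw [abs_pow]
        exact pow_le_pow_left₀ (abs_nonneg _) (norm_le_pi_norm x i) _
    _ = ‖x‖ ^ s.degree := by
        rw [Finset.prod_pow_eq_pow_sum, Finsupp.degree_eq_sum]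
    _ ≤ _ := pow_le_pow_right₀ hx (le_totalDegree hs)

theorem pp_crit {d : ℕ} (f : MvPolynomial (Fin d) ℝ) (ε : ℝ) (hε : 0 < ε) (p : Fin d → ℝ)
    (hp : ε * ∑ i, p i ^ (2 * f.totalDegree + 2) < (eval p f) ^ 2) :
    ∃ z ∈ connectedComponentIn {x | eval x f = 0}ᶜ p, ∀ i,
      z i ^ (2 * f.totalDegree + 1) =
        eval z (C (((2 * f.totalDegree + 2 : ℕ) * ε)⁻¹) * pderiv i (f ^ 2)) := by
  set D := f.totalDegree with hD
  set F : MvPolynomial (Fin d) ℝ := f ^ 2 - C ε * ∑ i, X i ^ (2 * D + 2) with hF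
  have hFe : ∀ x, eval x F = (eval x f) ^ 2 - ε * ∑ i, x i ^ (2 * D + 2) := by
    intro x; simp [hF]
  have hcf : Continuous fun x : Fin d → ℝ => eval x f := f.continuous_eval
  have hcF : Continuous fun x : Fin d → ℝ => eval x F := F.continuous_eval
  set U : Set (Fin d → ℝ) := {x | eval x f = 0}ᶜ with hU
  have hUo : IsOpen U := by
    rw [hU]; exact (isClosed_eq hcf continuous_const).isOpen_compl
  have hsum0 : ∀ x : Fin d → ℝ, 0 ≤ ∑ i, x i ^ (2 * D + 2) := fun x =>
    Finset.sum_nonneg fun i _ => Even.pow_nonneg ⟨D + 1, by ring⟩ _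
  have hpU : p ∈ U := by
    intro h0
    have h0 : eval p f = 0 := h0
    have := mul_nonneg hε.le (hsum0 p)
    rw [h0] at hp
    simp at hp; linarith
  set S := connectedComponentIn U p with hS
  have hSo : IsOpen S := hUo.connectedComponentIn
  have hpS : p ∈ S := mem_connectedComponentIn hpU
  have hFp : 0 < eval p F := by rw [hFe]; linarith
  have hev : ∀ᶠ x in Filter.cocompact (Fin d → ℝ) ⊓ Filter.principal (closure S), eval x F ≤ eval p F := by
    apply Filter.Eventually.filter_mono inf_le_left
    obtain ⟨K, hK0, hK⟩ := pp_growth f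
    have ht : Filter.Tendsto (fun x : Fin d → ℝ => ‖x‖) (Filter.cocompact _) Filter.atTop := tendsto_norm_cocompact_atTop
    filter_upwards [ht.eventually_ge_atTop 1, ht.eventually_ge_atTop (K ^ 2 / ε)] with x h1 h2
    refine le_trans ?_ hFp.le
    rw [hFe, sub_nonpos]
    have h3 : ‖x‖ ^ (2 * D + 2) ≤ ∑ i, x i ^ (2 * D + 2) := by
      have hne : Nonempty (Fin d) := by
        by_contra hcon
        rw [not_nonempty_iff] at hcon
        have : x = 0 := Subsingleton.elim _ _
        rw [this] at h1; simp at h1; linarith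
      obtain ⟨i, hi⟩ := Finite.exists_max (fun i => ‖x i‖)
      have hxi : ‖x‖ ≤ ‖x i‖ := (pi_norm_le_iff_of_nonneg (norm_nonneg _)).mpr hi
      calc ‖x‖ ^ (2 * D + 2) ≤ ‖x i‖ ^ (2 * D + 2) := pow_le_pow_left₀ (norm_nonneg _) hxi _
        _ = x i ^ (2 * D + 2) := by
            rw [Real.norm_eq_abs]; exact Even.pow_abs ⟨D + 1, by ring⟩ _
        _ ≤ _ := Finset.single_le_sum (f := fun i => x i ^ (2 * D + 2))
            (fun i _ => Even.pow_nonneg ⟨D + 1, by ring⟩ _) (Finset.mem_univ i)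
    have h4 : (eval x f) ^ 2 ≤ (K * ‖x‖ ^ D) ^ 2 := by
      rw [← sq_abs]; exact pow_le_pow_left₀ (abs_nonneg _) (hK x h1) 2
    have h5 : K ^ 2 ≤ ε * ‖x‖ ^ 2 := by
      rw [div_le_iff₀ hε] at h2
      nlinarith
    calc (eval x f) ^ 2 ≤ (K * ‖x‖ ^ D) ^ 2 := h4
      _ = K ^ 2 * (‖x‖ ^ D) ^ 2 := by ring
      _ ≤ (ε * ‖x‖ ^ 2) * (‖x‖ ^ D) ^ 2 := mul_le_mul_of_nonneg_right h5 (by positivity)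
      _ = ε * ‖x‖ ^ (2 * D + 2) := by ring
      _ ≤ _ := mul_le_mul_of_nonneg_left h3 hε.le
  obtain ⟨z, hz, hmax⟩ := hcF.continuousOn.exists_isMaxOn' isClosed_closure (subset_closure hpS) hev
  have hFz : 0 < eval z F := hFp.trans_le (hmax (subset_closure hpS))
  have hfz : z ∈ U := by
    intro h0
    have h0 : eval z f = 0 := h0
    have := mul_nonneg hε.le (hsum0 z)
    rw [hFe, h0] at hFz
    simp at hFz; linarith
  have hzS : z ∈ S := by
    have ho : IsOpen (connectedComponentIn U z) := hUo.connectedComponentIn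
    obtain ⟨w, hw1, hw2⟩ := mem_closure_iff.mp hz _ ho (mem_connectedComponentIn hfz)
    have e1 := connectedComponentIn_eq hw1
    have e2 := connectedComponentIn_eq hw2
    rw [hS, e2, ← e1]
    exact mem_connectedComponentIn hfz
  refine ⟨z, hzS, fun i => ?_⟩
  have hloc : IsLocalMax (fun t : ℝ => eval (Function.update z i t) F) (z i) := by
    have hc : Continuous fun t : ℝ => Function.update z i t := continuous_const.update i continuous_id
    have hn : (fun t : ℝ => Function.update z i t) ⁻¹' S ∈ nhds (z i) :=
      (hSo.preimage hc).mem_nhds (by simpa using hzS)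
    filter_upwards [hn] with t ht
    have := hmax (subset_closure ht)
    simpa using this
  have hd0 := hloc.hasDerivAt_eq_zero (pp_hasDerivAt F z i)
  have hsum : eval z (pderiv i (∑ j, X j ^ (2 * D + 2) : MvPolynomial (Fin d) ℝ)) = ((2 * D + 2 : ℕ) : ℝ) * z i ^ (2 * D + 1) := by
    rw [map_sum, map_sum, Finset.sum_eq_single i]
    · rw [Derivation.leibniz_pow, pderiv_X_self]; simp
    · intro j _ hj
      rw [Derivation.leibniz_pow, pderiv_X_of_ne hj]; simp
    · simp
  rw [hF, map_sub, Derivation.leibniz, pderiv_C, smul_zero, add_zero, map_sub, smul_eq_mul, map_mul, hsum, eval_C] at hd0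
  rw [map_mul, eval_C]
  have hpos : (0:ℝ) < ((2 * D + 2 : ℕ) : ℝ) * ε := by positivity
  rw [eq_inv_mul_iff_mul_eq₀ hpos.ne']
  linarith

theorem pp_comps_finset {d : ℕ} (f : MvPolynomial (Fin d) ℝ) (T : Finset (Set (Fin d → ℝ)))
    (hT : ∀ S ∈ T, ∃ x, eval x f ≠ 0 ∧ S = connectedComponentIn {x | eval x f = 0}ᶜ x) :
    T.card ≤ (2 * f.totalDegree + 1) ^ d := by
  classical
  choose! x hx hS using hT
  have hε : ∃ ε : ℝ, 0 < ε ∧ ∀ S ∈ T, ε * ∑ i, x S i ^ (2 * f.totalDegree + 2) < (eval (x S) f) ^ 2 := by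
    have : ∀ᶠ ε in nhdsWithin (0:ℝ) (Set.Ioi 0), ∀ S ∈ T, ε * ∑ i, x S i ^ (2 * f.totalDegree + 2) < (eval (x S) f) ^ 2 := by
      rw [Filter.eventually_all_finset]
      intro S hST
      have ht : Filter.Tendsto (fun ε : ℝ => ε * ∑ i, x S i ^ (2 * f.totalDegree + 2)) (nhdsWithin 0 (Set.Ioi 0)) (nhds (0 * ∑ i, x S i ^ (2 * f.totalDegree + 2))) :=
        (Filter.tendsto_id.mono_left nhdsWithin_le_nhds).mul_const _
      rw [zero_mul] at ht
      exact ht.eventually_lt_const (by have := hx S hST; positivity)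
    obtain ⟨ε, h1, h2⟩ := (this.and self_mem_nhdsWithin).exists
    exact ⟨ε, h2, h1⟩
  obtain ⟨ε, hε, hlt⟩ := hε
  have hz : ∀ S ∈ T, ∃ z ∈ S, ∀ i, z i ^ (2 * f.totalDegree + 1) =
        eval z (C (((2 * f.totalDegree + 2 : ℕ) * ε)⁻¹) * pderiv i (f ^ 2)) := by
    intro S hST
    obtain ⟨z, hz, h⟩ := pp_crit f ε hε (x S) (hlt S hST)
    rw [← hS S hST] at hz
    exact ⟨z, hz, h⟩
  choose! z hzS hzc using hz
  have hinj : Set.InjOn z T := by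
    intro S hST S' hST' h
    have h1 := hzS S hST
    have h2 := hzS S' hST'
    rw [← h] at h2
    have h1 := (Set.ext_iff.mp (hS S hST) _).mp h1
    have h2 := (Set.ext_iff.mp (hS S' hST') _).mp h2
    rw [hS S hST, hS S' hST', connectedComponentIn_eq h1, connectedComponentIn_eq h2]
  rw [← Finset.card_image_of_injOn hinj]
  refine pp_bezout (n := 2 * f.totalDegree + 1) (fun i => C (((2 * f.totalDegree + 2 : ℕ) * ε)⁻¹) * pderiv i (f ^ 2)) ?_ _ ?_
  · intro i
    have h1 := totalDegree_mul (C (((2 * f.totalDegree + 2 : ℕ) * ε)⁻¹)) (pderiv i (f ^ 2))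
    have h2 := pp_totalDegree_pderiv (f ^ 2) i
    have h3 := totalDegree_pow f 2
    rw [totalDegree_C] at h1
    omega
  · intro w hw
    obtain ⟨S, hST, rfl⟩ := Finset.mem_image.mp hw
    exact hzc S hST

theorem pp_comps {d : ℕ} (f : MvPolynomial (Fin d) ℝ) :
    {S : Set (Fin d → ℝ) | ∃ x, eval x f ≠ 0 ∧ S = connectedComponentIn {x | eval x f = 0}ᶜ x}.Finite ∧
    {S : Set (Fin d → ℝ) | ∃ x, eval x f ≠ 0 ∧ S = connectedComponentIn {x | eval x f = 0}ᶜ x}.ncard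
      ≤ (2 * f.totalDegree + 1) ^ d := by
  set A := {S : Set (Fin d → ℝ) | ∃ x, eval x f ≠ 0 ∧ S = connectedComponentIn {x | eval x f = 0}ᶜ x} with hA
  have hfin : A.Finite := by
    by_contra h
    obtain ⟨T, hTA, hc⟩ := Set.Infinite.exists_subset_card_eq h ((2 * f.totalDegree + 1) ^ d + 1)
    have := pp_comps_finset f T (fun S hS => hTA hS)
    omega
  refine ⟨hfin, ?_⟩
  rw [Set.ncard_eq_toFinset_card A hfin]
  exact pp_comps_finset f _ (fun S hS => (hfin.mem_toFinset.mp hS))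

theorem pp_odd_root (p : Polynomial ℝ) (hm : p.Monic) (ho : Odd p.natDegree) : ∃ x, p.IsRoot x := by
  have hpos : 0 < p.natDegree := ho.pos
  have h1 : Filter.Tendsto (fun x => Polynomial.eval x p) Filter.atTop Filter.atTop :=
    p.tendsto_atTop_of_leadingCoeff_nonneg (Polynomial.natDegree_pos_iff_degree_pos.mp hpos) (by simp [hm.leadingCoeff])
  have h2 : Filter.Tendsto (fun x => Polynomial.eval x (-(p.comp (-Polynomial.X)))) Filter.atTop Filter.atTop := by
    have hnd : (-(p.comp (-Polynomial.X))).natDegree = p.natDegree := by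
      rw [Polynomial.natDegree_neg, Polynomial.natDegree_comp]; simp
    apply Polynomial.tendsto_atTop_of_leadingCoeff_nonneg
    · rw [← Polynomial.natDegree_pos_iff_degree_pos, hnd]; exact hpos
    · rw [Polynomial.leadingCoeff_neg, Polynomial.leadingCoeff_comp (by simp)]
      simp [hm.leadingCoeff, ho.neg_one_pow]
  obtain ⟨a, ha⟩ := (h1.eventually_ge_atTop 0).exists
  obtain ⟨b, hb⟩ := (h2.eventually_ge_atTop 0).exists
  simp at hb
  obtain ⟨x, hx⟩ := mem_range_of_exists_le_of_exists_ge (f := fun x => Polynomial.eval x p) (c := 0) p.continuous ⟨-b, hb⟩ ⟨a, ha⟩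
  exact ⟨x, hx⟩

theorem pp_char {R : Type} [CommRing R] [Algebra ℝ R] (N : ℕ) :
    ∀ (M : Type) [AddCommGroup M] [Module ℝ M] [Module R M] [IsScalarTower ℝ R M] [FiniteDimensional ℝ M],
      Module.finrank ℝ M = N → Odd N → ∃ χ : R →ₐ[ℝ] ℝ, ∀ r : R, (∀ m : M, r • m = 0) → χ r = 0 := by
  induction N using Nat.strong_induction_on with
  | _ N ih =>
    intro M _ _ _ _ _ hN hodd
    have hnt : Nontrivial M := Module.nontrivial_of_finrank_pos (R := ℝ) (by rw [hN]; exact hodd.pos)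
    by_cases hsc : ∀ r : R, ∃ l : ℝ, ∀ m : M, r • m = l • m
    · choose l hl using hsc
      obtain ⟨m, hm⟩ := exists_ne (0 : M)
      have huniq : ∀ r (a : ℝ), r • m = a • m → l r = a := by
        intro r a h
        rw [hl] at h
        exact smul_left_injective ℝ hm h
      refine ⟨{ toFun := l, map_one' := ?_, map_mul' := ?_, map_zero' := ?_, map_add' := ?_, commutes' := ?_ }, ?_⟩
      · exact huniq _ _ (by simp)
      · intro x y
        exact huniq _ _ (by rw [mul_smul, hl y, hl x, mul_smul, smul_comm])
      · exact huniq _ _ (by simp)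
      · intro x y
        exact huniq _ _ (by rw [add_smul, hl y, hl x, add_smul])
      · intro a
        exact huniq _ _ (by simp)
      · intro r hr
        exact huniq _ _ (by rw [hr, zero_smul])
    · push Not at hsc
      obtain ⟨r, hr⟩ := hsc
      let T : Module.End ℝ M := 
        { toFun := fun m => r • m, map_add' := fun x y => smul_add _ _ _, map_smul' := fun a x => by
            simp only [RingHom.id_apply]
            rw [← algebraMap_smul R a x, ← algebraMap_smul R a (r • x), smul_smul, smul_smul, mul_comm] }
      obtain ⟨l, hl⟩ := pp_odd_root T.charpoly T.charpoly_monic (by rw [T.charpoly_natDegree, hN]; exact hodd)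
      rw [← Module.End.hasEigenvalue_iff_isRoot_charpoly] at hl
      obtain ⟨v, hv⟩ := hl.exists_hasEigenvector
      have hv0 := hv.2
      have hv1 : r • v = l • v := hv.apply_eq_smul
      let K : Submodule R M := LinearMap.ker (LinearMap.lsmul R M (r - algebraMap ℝ R l))
      have hK : ∀ m, m ∈ K ↔ r • m = l • m := by
        intro m
        simp [K, sub_eq_zero]
      have hKne : K ≠ ⊤ := by
        intro h
        obtain ⟨m, hm⟩ := hr l
        exact hm ((hK m).mp (h ▸ trivial))
      have hadd := Submodule.finrank_quotient_add_finrank (K.restrictScalars ℝ)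
      have hq : Module.finrank ℝ (M ⧸ K) = Module.finrank ℝ (M ⧸ K.restrictScalars ℝ) :=
        (Submodule.Quotient.restrictScalarsEquiv ℝ K).symm.finrank_eq
      rw [← hq, hN] at hadd
      have hK1 : 0 < Module.finrank ℝ (K.restrictScalars ℝ) := by
        rw [Module.finrank_pos_iff_exists_ne_zero]
        exact ⟨⟨v, (hK v).mpr hv1⟩, fun h => hv0 (congrArg Subtype.val h)⟩
      have hK2 : 0 < Module.finrank ℝ (M ⧸ K) := by
        have : Nontrivial (M ⧸ K) := Submodule.Quotient.nontrivial_iff.mpr hKne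
        have : FiniteDimensional ℝ (M ⧸ K) := Module.Finite.equiv (Submodule.Quotient.restrictScalarsEquiv ℝ K)
        exact Module.finrank_pos
      have hpar : Odd (Module.finrank ℝ (M ⧸ K)) ∨ Odd (Module.finrank ℝ (K.restrictScalars ℝ)) := by
        by_contra hcon
        push Not at hcon
        rw [Nat.not_odd_iff_even, Nat.not_odd_iff_even] at hcon
        have := hcon.1.add hcon.2
        rw [hadd] at this
        exact (Nat.not_odd_iff_even.mpr this) hodd
      rcases hpar with h | h
      · have : FiniteDimensional ℝ (M ⧸ K) := Module.Finite.equiv (Submodule.Quotient.restrictScalarsEquiv ℝ K)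
        obtain ⟨χ, hχ⟩ := ih _ (by omega) (M ⧸ K) rfl h
        refine ⟨χ, fun s hs => hχ s fun m => ?_⟩
        obtain ⟨m, rfl⟩ := Submodule.Quotient.mk_surjective K m
        rw [← Submodule.Quotient.mk_smul, hs, Submodule.Quotient.mk_zero]
      · have hst : IsScalarTower ℝ R (K.restrictScalars ℝ) := ⟨fun a s m => Subtype.ext (smul_assoc a s (m : M))⟩
        obtain ⟨χ, hχ⟩ := ih _ (by omega) (K.restrictScalars ℝ) rfl h
        refine ⟨χ, fun s hs => hχ s fun m => ?_⟩
        apply Subtype.ext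
        exact hs m

/-- The candidate basis. -/
noncomputable def ppb {K : Type} [CommRing K] {n : ℕ} (D : ℕ) (G : Fin n → MvPolynomial (Fin n) K) (ν : Fin n →₀ ℕ) :
    MvPolynomial (Fin n) K :=
  ∏ i, (G i ^ (ν i / D) * X i ^ (ν i % D))

theorem ppb_totalDegree {K : Type} [CommRing K] [Nontrivial K] {n : ℕ} (D : ℕ) (G : Fin n → MvPolynomial (Fin n) K)
    (hG : ∀ i, (G i).totalDegree ≤ D) (ν : Fin n →₀ ℕ) : (ppb D G ν).totalDegree ≤ ν.degree := by
  refine (totalDegree_finsetProd _ _).trans ?_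
  rw [Finsupp.degree_eq_sum]
  refine Finset.sum_le_sum fun i _ => ?_
  refine (totalDegree_mul _ _).trans ?_
  have h1 := (totalDegree_pow (G i) (ν i / D)).trans (Nat.mul_le_mul_left _ (hG i))
  rw [totalDegree_X_pow]
  have := Nat.div_add_mod (ν i) D
  nlinarith

theorem ppb_X {K : Type} [CommRing K] {n : ℕ} (D : ℕ) (ν : Fin n →₀ ℕ) :
    ppb D (fun i => (X i ^ D : MvPolynomial (Fin n) K)) ν = monomial ν 1 := by
  rw [monomial_eq, Finsupp.prod_fintype _ _ (fun i => pow_zero _)]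
  simp only [ppb, map_one, one_mul]
  refine Finset.prod_congr rfl fun i _ => ?_
  rw [← pow_mul, ← pow_add, Nat.div_add_mod]

theorem ppb_map {K L : Type} [CommRing K] [CommRing L] (φ : K →+* L) {n : ℕ} (D : ℕ) (G : Fin n → MvPolynomial (Fin n) K)
    (ν : Fin n →₀ ℕ) : map φ (ppb D G ν) = ppb D (fun i => map φ (G i)) ν := by
  simp [ppb]

theorem ppb_mul {K : Type} [CommRing K] {n : ℕ} (D : ℕ) (hD : 0 < D) (G : Fin n → MvPolynomial (Fin n) K)
    (ν : Fin n →₀ ℕ) (i : Fin n) : ppb D G (Finsupp.single i D + ν) = G i * ppb D G ν := by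
  classical
  unfold ppb
  rw [← Finset.mul_prod_erase _ _ (Finset.mem_univ i), ← Finset.mul_prod_erase _ _ (Finset.mem_univ i), ← mul_assoc]
  congr 1
  · simp only [Finsupp.add_apply, Finsupp.single_eq_same]
    rw [Nat.add_div_left _ hD, Nat.add_mod_left, pow_succ]; ring
  · refine Finset.prod_congr rfl fun j hj => ?_
    have : i ≠ j := (Finset.ne_of_mem_erase hj).symm
    simp [Finsupp.single_eq_of_ne this.symm]

/-- index set -/
abbrev PPI (n k : ℕ) := {ν : Fin n →₀ ℕ // ν.degree ≤ k}

noncomputable instance ppiFintype (n k : ℕ) : Fintype (PPI n k) :=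
  (Finsupp.finite_of_degree_le (σ := Fin n) k).fintype

noncomputable def ppM {K : Type} [CommRing K] {n : ℕ} (D : ℕ) (G : Fin n → MvPolynomial (Fin n) K) (k : ℕ) :
    Matrix (PPI n k) (PPI n k) K := fun μ ν => coeff μ.1 (ppb D G ν.1)

theorem ppM_det_map {K L : Type} [CommRing K] [CommRing L] (φ : K →+* L) {n : ℕ} (D : ℕ)
    (G : Fin n → MvPolynomial (Fin n) K) (k : ℕ) :
    φ (ppM D G k).det = (ppM D (fun i => map φ (G i)) k).det := by
  rw [RingHom.map_det]
  congr 1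
  ext μ ν
  simp [ppM, ← ppb_map, coeff_map]

theorem pp_countable {n : ℕ} (D : ℕ) (p : Fin n → MvPolynomial (Fin n) ℝ) :
    {t : ℝ | ∃ k, (ppM D (fun i => X i ^ D + C t * p i) k).det = 0}.Countable := by
  rw [Set.setOf_exists]
  refine Set.countable_iUnion fun k => Set.Finite.countable ?_
  let G : Fin n → MvPolynomial (Fin n) (Polynomial ℝ) := fun i => X i ^ D + C Polynomial.X * map Polynomial.C (p i)
  have hG : ∀ t : ℝ, (fun i => map (Polynomial.evalRingHom t) (G i)) = fun i => X i ^ D + C t * p i := by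
    intro t
    ext1 i
    simp only [G, map_add, map_mul, map_pow, map_X, map_C, map_map]
    have : (Polynomial.evalRingHom t).comp Polynomial.C = RingHom.id ℝ := by ext; simp
    rw [this, map_id]; simp
  have hdet : ∀ t, Polynomial.eval t (ppM D G k).det = (ppM D (fun i => X i ^ D + C t * p i) k).det := by
    intro t
    rw [← hG t, ← ppM_det_map]; rfl
  have hne : (ppM D G k).det ≠ 0 := by
    intro h0
    have h1 := hdet 0
    rw [h0] at h1
    have : ppM D (fun i => X i ^ D + C 0 * p i) k = (1 : Matrix (PPI n k) (PPI n k) ℝ) := by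
      ext μ ν
      simp only [ppM, map_zero, zero_mul, add_zero, ppb_X, coeff_monomial, Matrix.one_apply]
      simp only [Subtype.ext_iff, eq_comm]
    rw [this, Matrix.det_one] at h1
    simp at h1
  refine ((ppM D G k).det.roots.toFinset.finite_toSet).subset fun t ht => ?_
  simp only [Set.mem_setOf_eq] at ht
  simp [hne, hdet, ht]

theorem pp_li {n : ℕ} (D : ℕ) (G : Fin n → MvPolynomial (Fin n) ℝ)
    (hG : ∀ k, (ppM D G k).det ≠ 0) : LinearIndependent ℝ (ppb D G) := by
  classical
  rw [linearIndependent_iff]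
  intro l hl
  obtain ⟨k, hk⟩ : ∃ k, ∀ ν ∈ l.support, ν.degree ≤ k := ⟨l.support.sup Finsupp.degree, fun ν hν => Finset.le_sup hν⟩
  have hz : (ppM D G k).mulVec (fun ν => l ν.1) = 0 := by
    ext μ
    have h1 := congrArg (coeff μ.1) hl
    rw [Finsupp.linearCombination_apply, Finsupp.sum, coeff_sum] at h1
    simp only [Matrix.mulVec, dotProduct, ppM]
    rw [Pi.zero_apply, ← coeff_zero μ.1, ← h1]
    rw [← Finset.sum_subtype_of_mem (p := fun ν : Fin n →₀ ℕ => ν.degree ≤ k) (fun ν => coeff μ.1 (l ν • ppb D G ν)) hk]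
    symm
    refine Finset.sum_subset_zero_on_sdiff (Finset.subset_univ _) ?_ ?_
    · intro ν hν
      simp at hν
      simp [hν]
    · intro ν _
      simp [mul_comm]
  have := Matrix.eq_zero_of_mulVec_eq_zero (hG k) hz
  ext ν
  by_contra hν
  exact hν (congrFun this ⟨ν, hk ν (by simpa using hν)⟩)

theorem pp_span {n : ℕ} (D : ℕ) (G : Fin n → MvPolynomial (Fin n) ℝ) (hGD : ∀ i, (G i).totalDegree ≤ D)
    (hG : ∀ k, (ppM D G k).det ≠ 0) : ⊤ ≤ Submodule.span ℝ (Set.range (ppb D G)) := by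
  classical
  intro q _
  set k := q.totalDegree with hk
  have hu : IsUnit (ppM D G k).det := (hG k).isUnit
  let a : PPI n k → ℝ := ((ppM D G k)⁻¹).mulVec fun μ => coeff μ.1 q
  have ha : (ppM D G k).mulVec a = fun μ => coeff μ.1 q := by
    simp only [a]
    rw [Matrix.mulVec_mulVec, Matrix.mul_nonsing_inv _ hu, Matrix.one_mulVec]
  have hq : q = ∑ ν, a ν • ppb D G ν.1 := by
    ext μ
    rw [coeff_sum]
    by_cases hμ : μ.degree ≤ k
    · have := congrFun ha ⟨μ, hμ⟩
      simp only [Matrix.mulVec, dotProduct, ppM] at this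
      rw [← this]
      refine Finset.sum_congr rfl fun ν _ => ?_
      simp [mul_comm]
    · push Not at hμ
      rw [coeff_eq_zero_of_totalDegree_lt (by exact hμ)]
      symm
      refine Finset.sum_eq_zero fun ν _ => ?_
      rw [coeff_smul, coeff_eq_zero_of_totalDegree_lt, smul_zero]
      exact lt_of_le_of_lt ((ppb_totalDegree D G hGD ν.1).trans ν.2) hμ
  rw [hq]
  exact Submodule.sum_mem _ fun ν _ => Submodule.smul_mem _ _ (Submodule.subset_span ⟨_, rfl⟩)

theorem pp_zero_of_det {n : ℕ} (D : ℕ) (hD : Odd D) (G : Fin n → MvPolynomial (Fin n) ℝ)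
    (hGD : ∀ i, (G i).totalDegree ≤ D)
    (hG : ∀ k, (ppM D G k).det ≠ 0) : ∃ x : Fin n → ℝ, ∀ i, eval x (G i) = 0 := by
  classical
  let B : Module.Basis (Fin n →₀ ℕ) ℝ (MvPolynomial (Fin n) ℝ) := Module.Basis.mk (pp_li D G hG) (pp_span D G hGD hG)
  have hB : ∀ ν, B ν = ppb D G ν := fun ν => by simp [B]
  let I : Ideal (MvPolynomial (Fin n) ℝ) := Ideal.span (Set.range G)
  let e : (Fin n → Fin D) → (Fin n →₀ ℕ) := fun a => Finsupp.equivFunOnFinite.symm fun i => (a i : ℕ)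
  have he : Function.Injective e := by
    intro a b hab
    ext i
    exact DFunLike.congr_fun hab i
  let L : MvPolynomial (Fin n) ℝ →ₗ[ℝ] ((Fin n → Fin D) → ℝ) :=
    LinearMap.pi fun a => B.coord (e a)
  have hL : ∀ q a, L q a = B.repr q (e a) := fun q a => rfl
  have hsurj : Function.Surjective L := by
    intro g
    refine ⟨∑ a, g a • B (e a), ?_⟩
    ext a
    rw [hL, map_sum, Finsupp.finset_sum_apply, Finset.sum_eq_single a]
    · simp
    · intro b _ hb
      simp [Finsupp.single_apply, he.ne hb]
    · simp
  have hker : LinearMap.ker L = I.restrictScalars ℝ := by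
    ext q
    rw [LinearMap.mem_ker, Submodule.restrictScalars_mem]
    constructor
    · intro hq
      rw [← B.linearCombination_repr q, Finsupp.linearCombination_apply, Finsupp.sum]
      refine Ideal.sum_mem _ fun ν hν => ?_
      rw [← algebraMap_smul (MvPolynomial (Fin n) ℝ), smul_eq_mul]
      refine Ideal.mul_mem_left _ _ ?_
      by_cases hbox : ∀ i, ν i < D
      · exfalso
        have h1 := congrFun hq (fun i => ⟨ν i, hbox i⟩)
        rw [hL] at h1
        have h2 : e (fun i => ⟨ν i, hbox i⟩) = ν := by ext i; rfl
        rw [h2] at h1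
        exact (Finsupp.mem_support_iff.mp hν) h1
      · push Not at hbox
        obtain ⟨i, hi⟩ := hbox
        have hle : Finsupp.single i D ≤ ν := by simpa using hi
        obtain ⟨ν', rfl⟩ := le_iff_exists_add.mp hle
        rw [hB, ppb_mul D hD.pos]
        exact Ideal.mul_mem_right _ _ (Ideal.subset_span ⟨i, rfl⟩)
    · intro hq
      obtain ⟨c, rfl⟩ := (Ideal.mem_span_range_iff_exists_fun).mp hq
      rw [map_sum]
      refine Finset.sum_eq_zero fun i _ => ?_
      have : L ∘ₗ (LinearMap.mulRight ℝ (G i)) = 0 := by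
        refine B.ext fun ν => ?_
        rw [LinearMap.comp_apply, LinearMap.mulRight_apply, hB, mul_comm, ← ppb_mul D hD.pos, ← hB]
        ext a
        rw [hL, B.repr_self, Finsupp.single_apply, if_neg]
        · rfl
        · intro h
          have := DFunLike.congr_fun h i
          have h2 : (e a) i < D := (a i).2
          simp at this
          omega
      exact LinearMap.congr_fun this (c i)
  let E : (MvPolynomial (Fin n) ℝ ⧸ I) ≃ₗ[ℝ] ((Fin n → Fin D) → ℝ) :=
    (Submodule.Quotient.restrictScalarsEquiv ℝ I).symm.trans
      ((Submodule.quotEquivOfEq _ _ hker.symm).trans (L.quotKerEquivOfSurjective hsurj))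
  have hfd : FiniteDimensional ℝ (MvPolynomial (Fin n) ℝ ⧸ I) := Module.Finite.equiv E.symm
  have hfr : Module.finrank ℝ (MvPolynomial (Fin n) ℝ ⧸ I) = D ^ n := by
    rw [E.finrank_eq]; simp
  obtain ⟨χ, hχ⟩ := pp_char (R := MvPolynomial (Fin n) ℝ) _ (MvPolynomial (Fin n) ℝ ⧸ I) hfr hD.pow
  refine ⟨fun i => χ (X i), fun i => ?_⟩
  have h1 : χ (G i) = 0 := by
    refine hχ _ fun m => ?_
    obtain ⟨m, rfl⟩ := Ideal.Quotient.mk_surjective m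
    rw [← Ideal.Quotient.mk_eq_mk, ← Submodule.Quotient.mk_smul, Ideal.Quotient.mk_eq_mk, Ideal.Quotient.eq_zero_iff_mem, smul_eq_mul]
    exact Ideal.mul_mem_right _ _ (Ideal.subset_span ⟨i, rfl⟩)
  rw [← h1, ← coe_aeval_eq_eval]
  have : χ = aeval (fun i => χ (X i)) := by
    apply MvPolynomial.algHom_ext; simp
  conv_rhs => rw [this]
  rfl

theorem pp_odd_system {n : ℕ} (D : ℕ) (hD : Odd D) (p : Fin n → MvPolynomial (Fin n) ℝ)
    (hp : ∀ i, (p i).totalDegree ≤ D) (A : ℝ) :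
    ∃ t : ℝ, A ≤ t ∧ ∃ x : Fin n → ℝ, ∀ i, x i ^ D + t * eval x (p i) = 0 := by
  have hc := pp_countable D p
  obtain ⟨t, ht, htA⟩ : ∃ t, t ∉ {t : ℝ | ∃ k, (ppM D (fun i => X i ^ D + C t * p i) k).det = 0} ∧ A < t := by
    obtain ⟨t, h1, h2⟩ := (hc.dense_compl ℝ).exists_mem_open isOpen_Ioi (Set.nonempty_Ioi (a := A))
    exact ⟨t, h1, h2⟩
  simp only [Set.mem_setOf_eq, not_exists] at ht
  obtain ⟨x, hx⟩ := pp_zero_of_det D hD (fun i => X i ^ D + C t * p i) (fun i => by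
    refine (totalDegree_add _ _).trans (max_le ?_ ?_)
    · rw [totalDegree_X_pow]
    · refine (totalDegree_mul _ _).trans ?_
      rw [totalDegree_C, zero_add]; exact hp i) ht
  exact ⟨t, htA.le, x, fun i => by simpa using hx i⟩

/-- Odd polynomials converging to the sign function on [-1,1]. -/
noncomputable def ppphi : ℕ → ℝ → ℝ
  | 0, u => u
  | m + 1, u => (3 * ppphi m u - ppphi m u ^ 3) / 2

theorem ppphi_neg (m : ℕ) (u : ℝ) : ppphi m (-u) = - ppphi m u := by
  induction m with
  | zero => rfl
  | succ m ih => simp only [ppphi, ih]; ring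

theorem ppphi_abs (m : ℕ) (u : ℝ) (hu : |u| ≤ 1) : |ppphi m u| ≤ 1 := by
  induction m with
  | zero => exact hu
  | succ m ih =>
    simp only [ppphi]
    rw [abs_le] at ih ⊢
    obtain ⟨h1, h2⟩ := ih
    generalize ppphi m u = w at *
    constructor
    · nlinarith [mul_nonneg (sq_nonneg (w + 1)) (by linarith : (0:ℝ) ≤ 2 - w)]
    · nlinarith [mul_nonneg (sq_nonneg (w - 1)) (by linarith : (0:ℝ) ≤ 2 + w)]

theorem ppphi_lower (m : ℕ) (δ u : ℝ) (hδ : 0 < δ) (h : δ ≤ u) (hu : u ≤ 1) :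
    δ ≤ ppphi m u ∧ ppphi m u ≤ 1 ∧ 1 - (1 - δ / 2) ^ m ≤ ppphi m u := by
  induction m with
  | zero => simp only [ppphi, pow_zero]; exact ⟨h, hu, by linarith⟩
  | succ m ih =>
    obtain ⟨h1, h2, h3⟩ := ih
    have hb := ppphi_abs (m + 1) u (abs_le.mpr ⟨by linarith, hu⟩)
    refine ⟨?_, (abs_le.mp hb).2, ?_⟩
    · simp only [ppphi]
      generalize ppphi m u = w at *
      have hw : 0 ≤ w * (1 - w ^ 2) := mul_nonneg (by linarith) (by nlinarith)
      nlinarith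
    · simp only [ppphi]
      generalize ppphi m u = w at *
      have e : (3 * w - w ^ 3) / 2 = 1 - (1 - w) * ((1 - w) * (2 + w) / 2) := by ring
      rw [e, pow_succ]
      have h4 : (1 - w) * (2 + w) / 2 ≤ 1 - δ / 2 := by nlinarith
      have h5 : (1 - w) * ((1 - w) * (2 + w) / 2) ≤ (1 - δ / 2) ^ m * (1 - δ / 2) := by
        apply mul_le_mul (by linarith) h4
        · apply div_nonneg (mul_nonneg _ _) <;> linarith
        · apply pow_nonneg; linarith
      linarith

noncomputable def ppPhi {n : ℕ} (L q : MvPolynomial (Fin n) ℝ) : ℕ → MvPolynomial (Fin n) ℝ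
  | 0 => L
  | m + 1 => C (1 / 2) * (C 3 * (q ^ (3 ^ m) * ppPhi L q m) - ppPhi L q m ^ 3)

theorem ppPhi_totalDegree {n : ℕ} (L q : MvPolynomial (Fin n) ℝ) (hL : L.totalDegree ≤ 1) (hq : q.totalDegree ≤ 2)
    (m : ℕ) : (ppPhi L q m).totalDegree ≤ 3 ^ m := by
  induction m with
  | zero => simpa [ppPhi] using hL
  | succ m ih =>
    simp only [ppPhi]
    refine (totalDegree_mul _ _).trans ?_
    rw [totalDegree_C, zero_add]
    refine (totalDegree_sub _ _).trans (max_le ?_ ?_)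
    · refine (totalDegree_mul _ _).trans ?_
      rw [totalDegree_C, zero_add]
      refine (totalDegree_mul _ _).trans ?_
      have := (totalDegree_pow q (3 ^ m)).trans (Nat.mul_le_mul_left _ hq)
      rw [pow_succ]; omega
    · have := (totalDegree_pow (ppPhi L q m) 3).trans (Nat.mul_le_mul_left _ ih)
      rw [pow_succ 3 m]; omega

theorem ppPhi_eval {n : ℕ} (L q : MvPolynomial (Fin n) ℝ) (x : Fin n → ℝ) (s u : ℝ)
    (hq : eval x q = s ^ 2) (hL : eval x L = s * u) (m : ℕ) :
    eval x (ppPhi L q m) = s ^ (3 ^ m) * ppphi m u := by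
  induction m with
  | zero => simpa [ppPhi, ppphi] using hL
  | succ m ih =>
    simp only [ppPhi, ppphi, map_mul, map_sub, map_pow, eval_C, ih, hq]
    have : s ^ (3 ^ (m + 1)) = (s ^ (3 ^ m)) ^ 3 := by rw [← pow_mul, pow_succ]
    rw [this, ← pow_mul, mul_comm 2, pow_mul]
    ring

theorem pp_approx {n : ℕ} {α : Type} (S : Fin n → Finset α) (w : α → Fin (n + 1) → ℝ) (m : ℕ) :
    ∃ y : Fin (n + 1) → ℝ, ∑ l, y l ^ 2 = 1 ∧
      ∀ i, |∑ p ∈ S i, ppphi m (∑ l, y l * w p l)| ≤ 1 / ((m : ℝ) + 1) := by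
  let L : α → MvPolynomial (Fin n) ℝ := fun p => C (w p 0) + ∑ j, C (w p (Fin.succ j)) * X j
  let q : MvPolynomial (Fin n) ℝ := 1 + ∑ j, X j ^ 2
  have hLd : ∀ p, (L p).totalDegree ≤ 1 := by
    intro p
    refine (totalDegree_add _ _).trans (max_le (by simp) ?_)
    refine totalDegree_finsetSum_le fun j _ => ?_
    refine (totalDegree_mul _ _).trans ?_
    simp
  have hqd : q.totalDegree ≤ 2 := by
    refine (totalDegree_add _ _).trans (max_le (by simp) ?_)
    refine totalDegree_finsetSum_le fun j _ => ?_
    simp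
  obtain ⟨t, ht, x, hx⟩ := pp_odd_system (3 ^ m) (Odd.pow (by decide)) (fun i => ∑ p ∈ S i, ppPhi (L p) q m)
    (fun i => totalDegree_finsetSum_le fun p _ => ppPhi_totalDegree _ _ (hLd p) hqd m) ((m : ℝ) + 1)
  have hQ : 0 < 1 + ∑ j, x j ^ 2 := by
    have := Finset.sum_nonneg (s := Finset.univ) (f := fun j => x j ^ 2) (fun j _ => sq_nonneg _)
    linarith
  set s := Real.sqrt (1 + ∑ j, x j ^ 2) with hs
  have hs0 : 0 < s := Real.sqrt_pos.mpr hQ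
  have hs2 : s ^ 2 = 1 + ∑ j, x j ^ 2 := Real.sq_sqrt hQ.le
  let y : Fin (n + 1) → ℝ := fun l => (Fin.cons 1 x : Fin (n + 1) → ℝ) l / s
  have hyL : ∀ p, eval x (L p) = s * ∑ l, y l * w p l := by
    intro p
    rw [Fin.sum_univ_succ]
    simp only [L, y, Fin.cons_zero, Fin.cons_succ, map_add, map_sum, map_mul, eval_C, eval_X]
    rw [mul_add, Finset.mul_sum]
    congr 1
    · field_simp
    · refine Finset.sum_congr rfl fun j _ => ?_
      field_simp
  have hq : eval x q = s ^ 2 := by rw [hs2]; simp [q]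
  refine ⟨y, ?_, fun i => ?_⟩
  · rw [Fin.sum_univ_succ]
    simp only [y, Fin.cons_zero, Fin.cons_succ, div_pow]
    rw [← Finset.sum_div, ← add_div, one_pow, ← hs2]
    exact div_self (by positivity)
  · have h1 := hx i
    simp only [map_sum] at h1
    rw [Finset.sum_congr rfl (fun p _ => ppPhi_eval (L p) q x s _ hq (hyL p) m), ← Finset.mul_sum] at h1
    set W := ∑ p ∈ S i, ppphi m (∑ l, y l * w p l)
    have hm1 : (0:ℝ) < (m : ℝ) + 1 := by positivity
    have ht0 : 0 < t := lt_of_lt_of_le hm1 ht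
    have h2 : t * s ^ 3 ^ m * |W| = |x i| ^ 3 ^ m := by
      rw [← abs_of_pos (show 0 < t * s ^ 3 ^ m by positivity), ← abs_mul, ← abs_pow, ← abs_neg]
      congr 1; linarith
    have h3 : |x i| ≤ s := by
      apply Real.abs_le_sqrt
      have := Finset.single_le_sum (f := fun j => x j ^ 2) (fun j _ => sq_nonneg _) (Finset.mem_univ i)
      linarith
    have h4 : |x i| ^ 3 ^ m ≤ s ^ 3 ^ m := pow_le_pow_left₀ (abs_nonneg _) h3 _
    rw [← h2] at h4
    have hsp : 0 < s ^ 3 ^ m := by positivity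
    have h5 : t * |W| ≤ 1 := by
      by_contra hcon
      push Not at hcon
      nlinarith
    rw [le_div_iff₀ hm1]
    nlinarith [abs_nonneg W]

theorem pp_half {α : Type} (S : Finset α) (u : ℕ → α → ℝ) (a : α → ℝ) (ψ : ℕ → ℕ)
    (hψ : Filter.Tendsto ψ Filter.atTop Filter.atTop)
    (hu : ∀ p, Filter.Tendsto (fun m => u m p) Filter.atTop (nhds (a p)))
    (hu1 : ∀ m p, |u m p| ≤ 1)
    (hsum : ∀ m, |∑ p ∈ S, ppphi (ψ m) (u m p)| ≤ 1 / ((ψ m : ℝ) + 1)) :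
    2 * (S.filter fun p => 0 < a p).card ≤ S.card := by
  by_contra hcon
  push Not at hcon
  set N := S.card with hN
  set η : ℝ := 1 / (2 * ((N : ℝ) + 1)) with hη
  have hη0 : 0 < η := by positivity
  have hev : ∀ p ∈ S.filter fun p => 0 < a p, ∀ᶠ m in Filter.atTop, 1 - η ≤ ppphi (ψ m) (u m p) := by
    intro p hp
    have hap : 0 < a p := (Finset.mem_filter.mp hp).2
    have ha1 : a p ≤ 1 := le_of_tendsto (hu p) (Filter.Eventually.of_forall fun m => (abs_le.mp (hu1 m p)).2)
    have e1 : ∀ᶠ m in Filter.atTop, a p / 2 ≤ u m p := (hu p).eventually_const_le (by linarith)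
    have e2 : Filter.Tendsto (fun m => (1 - a p / 2 / 2) ^ ψ m) Filter.atTop (nhds 0) :=
      (tendsto_pow_atTop_nhds_zero_of_lt_one (by linarith) (by linarith)).comp hψ
    filter_upwards [e1, e2.eventually_le_const hη0] with m h1 h2
    have := (ppphi_lower (ψ m) (a p / 2) (u m p) (by linarith) h1 (abs_le.mp (hu1 m p)).2).2.2
    linarith
  rw [← Filter.eventually_all_finset] at hev
  obtain ⟨m, h1, h2⟩ := (hev.and (hψ.eventually_ge_atTop 1)).exists
  have h3 := (abs_le.mp (hsum m)).2
  rw [← Finset.sum_filter_add_sum_filter_not S (fun p => 0 < a p)] at h3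
  have h4 : ((S.filter fun p => 0 < a p).card : ℝ) * (1 - η) ≤ ∑ p ∈ S with 0 < a p, ppphi (ψ m) (u m p) := by
    rw [← nsmul_eq_mul]
    exact Finset.card_nsmul_le_sum _ _ _ h1
  have h5 : ((S.filter fun p => ¬ 0 < a p).card : ℝ) * (-1) ≤ ∑ p ∈ S with ¬ 0 < a p, ppphi (ψ m) (u m p) := by
    rw [← nsmul_eq_mul]
    exact Finset.card_nsmul_le_sum _ _ _ fun p _ => (abs_le.mp (ppphi_abs _ _ (hu1 m p))).1
  have h6 : (S.filter fun p => 0 < a p).card + (S.filter fun p => ¬ 0 < a p).card = N :=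
    Finset.card_filter_add_card_filter_not _
  have h7 : 1 / ((ψ m : ℝ) + 1) ≤ 1 / 2 := by
    have : (1:ℝ) ≤ ψ m := by exact_mod_cast h2
    apply one_div_le_one_div_of_le <;> linarith
  have h6' : ((S.filter fun p => 0 < a p).card : ℝ) + (S.filter fun p => ¬ 0 < a p).card = N := by exact_mod_cast h6
  have hcon' : (N : ℝ) + 1 ≤ 2 * ((S.filter fun p => 0 < a p).card : ℝ) := by exact_mod_cast hcon
  set A := ((S.filter fun p => 0 < a p).card : ℝ)
  set A' := ((S.filter fun p => ¬ 0 < a p).card : ℝ)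
  have hA : A ≤ N := by
    have : 0 ≤ A' := Nat.cast_nonneg _
    linarith
  have h8 : η * ((N : ℝ) + 1) = 1 / 2 := by rw [hη]; field_simp
  have h9 : η * A ≤ η * N := mul_le_mul_of_nonneg_left hA hη0.le
  nlinarith

theorem pp_ham_sandwich {n : ℕ} {α : Type} (S : Fin n → Finset α) (v : α → Fin (n + 1) → ℝ) :
    ∃ a : Fin (n + 1) → ℝ, a ≠ 0 ∧ ∀ i,
      2 * ((S i).filter fun p => 0 < ∑ l, a l * v p l).card ≤ (S i).card ∧
      2 * ((S i).filter fun p => ∑ l, a l * v p l < 0).card ≤ (S i).card := by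
  let c : α → ℝ := fun p => 1 / (1 + ∑ l, |v p l|)
  have hden : ∀ p, 0 < 1 + ∑ l, |v p l| := fun p => by
    have := Finset.sum_nonneg (s := Finset.univ) (f := fun l => |v p l|) (fun l _ => abs_nonneg _)
    linarith
  have hc : ∀ p, 0 < c p := fun p => one_div_pos.mpr (hden p)
  let w : α → Fin (n + 1) → ℝ := fun p l => c p * v p l
  have hw : ∀ (y : Fin (n + 1) → ℝ) p, ∑ l, y l * w p l = c p * ∑ l, y l * v p l := by
    intro y p
    rw [Finset.mul_sum]
    exact Finset.sum_congr rfl fun l _ => by simp only [w]; ring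
  choose y hy1 hy2 using fun m => pp_approx S w m
  have hyl : ∀ m l, |y m l| ≤ 1 := by
    intro m l
    have := Finset.single_le_sum (f := fun l => y m l ^ 2) (fun j _ => sq_nonneg _) (Finset.mem_univ l)
    simp only [hy1 m] at this
    exact (sq_le_one_iff_abs_le_one _).mp this
  have hbd : ∀ m p, |∑ l, y m l * w p l| ≤ 1 := by
    intro m p
    rw [hw, abs_mul, abs_of_pos (hc p)]
    simp only [c]
    rw [one_div, inv_mul_le_iff₀ (hden p), mul_one]
    refine (Finset.abs_sum_le_sum_abs _ _).trans ?_
    have : ∑ l, |y m l * v p l| ≤ ∑ l, |v p l| := Finset.sum_le_sum fun l _ => by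
      rw [abs_mul]; exact mul_le_of_le_one_left (abs_nonneg _) (hyl m l)
    linarith
  obtain ⟨a, -, ψ, hψ, hlim⟩ := (isCompact_closedBall (0 : Fin (n + 1) → ℝ) 1).tendsto_subseq (x := y) (fun m => by
    rw [mem_closedBall_zero_iff, pi_norm_le_iff_of_nonneg zero_le_one]; exact hyl m)
  have hliml : ∀ l, Filter.Tendsto (fun m => y (ψ m) l) Filter.atTop (nhds (a l)) := fun l =>
    (tendsto_pi_nhds.mp hlim) l
  have ha1 : ∑ l, a l ^ 2 = 1 := by
    have : Filter.Tendsto (fun m => ∑ l, y (ψ m) l ^ 2) Filter.atTop (nhds (∑ l, a l ^ 2)) :=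
      tendsto_finsetSum _ fun l _ => (hliml l).pow 2
    simp only [hy1] at this
    exact tendsto_nhds_unique this tendsto_const_nhds |>.symm ▸ rfl
  have hlimw : ∀ p, Filter.Tendsto (fun m => ∑ l, y (ψ m) l * w p l) Filter.atTop (nhds (∑ l, a l * w p l)) := fun p =>
    tendsto_finsetSum _ fun l _ => (hliml l).mul_const _
  refine ⟨a, ?_, fun i => ⟨?_, ?_⟩⟩
  · rintro rfl
    simp at ha1
  · have := pp_half (S i) (fun m p => ∑ l, y (ψ m) l * w p l) _ ψ hψ.tendsto_atTop hlimw (fun m p => hbd _ p) (fun m => hy2 _ i)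
    simpa only [hw, mul_pos_iff_of_pos_left (hc _)] using this
  · have := pp_half (S i) (fun m p => -∑ l, y (ψ m) l * w p l) (fun p => -∑ l, a l * w p l) ψ hψ.tendsto_atTop
      (fun p => (hlimw p).neg) (fun m p => by rw [abs_neg]; exact hbd _ p)
      (fun m => by simp only [ppphi_neg, Finset.sum_neg_distrib, abs_neg]; exact hy2 _ i)
    simp only [hw, ← mul_neg, mul_pos_iff_of_pos_left (hc _), neg_pos] at this
    exact this

theorem pp_bisect {d : ℕ} (hd : 0 < d) {ι : Type} [Fintype ι] (S : ι → Finset (Fin d → ℝ)) :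
    ∃ g : MvPolynomial (Fin d) ℝ, g ≠ 0 ∧ (g.totalDegree : ℝ) ≤ d * (Fintype.card ι : ℝ) ^ (1 / (d : ℝ)) ∧
      ∀ c, 2 * ((S c).filter fun p => 0 < eval p g).card ≤ (S c).card ∧
        2 * ((S c).filter fun p => eval p g < 0).card ≤ (S c).card := by
  set n := Fintype.card ι with hn
  set k := ⌊(n : ℝ) ^ (1 / (d : ℝ))⌋₊ with hk
  have hkn : n + 1 ≤ (k + 1) ^ d := by
    have h1 : (n : ℝ) ^ (1 / (d : ℝ)) < (k : ℝ) + 1 := Nat.lt_floor_add_one _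
    have h2 : (n : ℝ) < ((k : ℝ) + 1) ^ d := by
      calc (n : ℝ) = ((n : ℝ) ^ (1 / (d : ℝ))) ^ d := by
            rw [one_div, Real.rpow_inv_natCast_pow (Nat.cast_nonneg n) hd.ne']
        _ < _ := pow_lt_pow_left₀ h1 (by positivity) hd.ne'
    exact_mod_cast h2
  obtain ⟨emb⟩ : Nonempty (Fin (n + 1) ↪ (Fin d → Fin (k + 1))) :=
    Function.Embedding.nonempty_of_card_le (by simpa using hkn)
  let ex : Fin (n + 1) → (Fin d →₀ ℕ) := fun l => Finsupp.equivFunOnFinite.symm fun i => (emb l i : ℕ)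
  have hex : Function.Injective ex := by
    intro l l' h
    apply emb.injective
    ext i
    exact DFunLike.congr_fun h i
  have hexd : ∀ l, (ex l).degree ≤ d * k := by
    intro l
    rw [Finsupp.degree_eq_sum]
    calc ∑ i, ex l i ≤ ∑ i : Fin d, k := Finset.sum_le_sum fun i _ => Nat.lt_succ_iff.mp (emb l i).2
      _ = d * k := by simp
  let e := Fintype.equivFin ι
  obtain ⟨a, ha, hS⟩ := pp_ham_sandwich (n := n) (fun i => S (e.symm i)) (fun p l => eval p (monomial (ex l) (1:ℝ)))
  let g : MvPolynomial (Fin d) ℝ := ∑ l, monomial (ex l) (a l)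
  have hg : ∀ p, eval p g = ∑ l, a l * eval p (monomial (ex l) (1:ℝ)) := by
    intro p
    simp only [g, map_sum, eval_monomial, one_mul]
  refine ⟨g, ?_, ?_, fun c => ?_⟩
  · intro h0
    apply ha
    ext l
    have h1 := congrArg (coeff (ex l)) h0
    simp only [g, coeff_sum, coeff_monomial, coeff_zero] at h1
    rw [Finset.sum_eq_single l (fun b _ hb => if_neg (hex.ne hb)) (by simp)] at h1
    simpa using h1
  · have h1 : g.totalDegree ≤ d * k := totalDegree_finsetSum_le fun l _ => (totalDegree_monomial_le _ _).trans (hexd l)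
    have h2 : (k : ℝ) ≤ (n : ℝ) ^ (1 / (d : ℝ)) := Nat.floor_le (by positivity)
    calc (g.totalDegree : ℝ) ≤ d * k := by exact_mod_cast h1
      _ ≤ _ := mul_le_mul_of_nonneg_left h2 (Nat.cast_nonneg _)
  · have := hS (e c)
    simpa only [Equiv.symm_apply_apply, ← hg] using this

theorem pp_sign {d : ℕ} (g : MvPolynomial (Fin d) ℝ) (U : Set (Fin d → ℝ)) (hU : IsPreconnected U)
    (h : ∀ x ∈ U, eval x g ≠ 0) : (∀ x ∈ U, 0 < eval x g) ∨ (∀ x ∈ U, eval x g < 0) := by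
  by_contra hcon
  push Not at hcon
  obtain ⟨⟨x, hx, hx0⟩, ⟨y, hy, hy0⟩⟩ := hcon
  obtain ⟨z, hz, hz0⟩ := hU.intermediate_value hx hy (f := fun x => eval x g) g.continuous_eval.continuousOn ⟨hx0, hy0⟩
  exact h z hz hz0

theorem pp_partition {d : ℕ} (hd : 0 < d) (P : Finset (Fin d → ℝ)) (j : ℕ) :
    ∃ f : MvPolynomial (Fin d) ℝ, f ≠ 0 ∧
      (f.totalDegree : ℝ) ≤ ∑ i ∈ Finset.range j, d * ((2 : ℝ) ^ i) ^ (1 / (d : ℝ)) ∧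
      ∃ (ι : Type) (_ : Fintype ι) (S : ι → Finset (Fin d → ℝ)), Fintype.card ι = 2 ^ j ∧
        (∀ c, 2 ^ j * (S c).card ≤ P.card) ∧
        ∀ U : Set (Fin d → ℝ), IsPreconnected U → (∀ x ∈ U, eval x f ≠ 0) →
          ∃ c, ∀ p ∈ P, p ∈ U → p ∈ S c := by
  induction j with
  | zero =>
    refine ⟨1, one_ne_zero, by simp, Unit, inferInstance, fun _ => P, by simp, by simp, fun U _ _ => ⟨(), fun p hp _ => hp⟩⟩
  | succ j ih =>
    obtain ⟨f, hf0, hfd, ι, _, S, hι, hS, hU⟩ := ih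
    obtain ⟨g, hg0, hgd, hg⟩ := pp_bisect hd S
    refine ⟨f * g, mul_ne_zero hf0 hg0, ?_, ι × Bool, inferInstance,
      fun c => if c.2 then (S c.1).filter (fun p => 0 < eval p g) else (S c.1).filter (fun p => eval p g < 0), ?_, ?_, ?_⟩
    · rw [Finset.sum_range_succ]
      rw [hι] at hgd
      push_cast at hgd
      have : ((f * g).totalDegree : ℝ) ≤ f.totalDegree + g.totalDegree := by exact_mod_cast totalDegree_mul f g
      linarith
    · rw [Fintype.card_prod, hι, Fintype.card_bool, pow_succ]
    · rintro ⟨c, b⟩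
      have h1 := hg c
      have h2 := hS c
      cases b
      · simp only [Bool.false_eq_true, if_false]
        calc 2 ^ (j + 1) * _ = 2 ^ j * (2 * ((S c).filter fun p => eval p g < 0).card) := by ring
          _ ≤ 2 ^ j * (S c).card := Nat.mul_le_mul_left _ h1.2
          _ ≤ _ := h2
      · simp only [if_true]
        calc 2 ^ (j + 1) * _ = 2 ^ j * (2 * ((S c).filter fun p => 0 < eval p g).card) := by ring
          _ ≤ 2 ^ j * (S c).card := Nat.mul_le_mul_left _ h1.1
          _ ≤ _ := h2
    · intro U hUc hU0
      simp only [map_mul, mul_ne_zero_iff] at hU0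
      obtain ⟨c, hc⟩ := hU U hUc fun x hx => (hU0 x hx).1
      rcases pp_sign g U hUc fun x hx => (hU0 x hx).2 with h | h
      · exact ⟨(c, true), fun p hp hpU => by simpa using ⟨hc p hp hpU, h p hpU⟩⟩
      · exact ⟨(c, false), fun p hp hpU => by simpa using ⟨hc p hp hpU, h p hpU⟩⟩

/-- **Polynomial partitioning (Guth–Katz).** For every `d ≥ 2` there is a constant
`c_d` such that for every finite set `P` of `m` points in `ℝ^d` and every real
`1 ≤ r ≤ m` there is a nonzero polynomial `f` of degree at most `c_d r^{1/d}` such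
that every connected component of `ℝ^d ∖ Z(f)` contains at most `m/r` points of
`P`; moreover, the number of connected components of `ℝ^d ∖ Z(f)` is at most
`c_d r`. -/
theorem polynomial_partitioning (d : ℕ) (hd : 2 ≤ d) :
    ∃ c : ℝ, 0 < c ∧
      ∀ (P : Finset (Fin d → ℝ)) (r : ℝ), 1 ≤ r → r ≤ P.card →
        ∃ f : MvPolynomial (Fin d) ℝ, f ≠ 0 ∧
          (f.totalDegree : ℝ) ≤ c * r ^ (1 / (d : ℝ)) ∧
          (∀ x : Fin d → ℝ, x ∉ zeroSet f →
            (((P : Set (Fin d → ℝ)) ∩ connectedComponentIn (zeroSet f)ᶜ x).ncard : ℝ)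
              ≤ (P.card : ℝ) / r) ∧
          {S : Set (Fin d → ℝ) | ∃ x, x ∉ zeroSet f ∧
              S = connectedComponentIn (zeroSet f)ᶜ x}.Finite ∧
          (({S : Set (Fin d → ℝ) | ∃ x, x ∉ zeroSet f ∧
              S = connectedComponentIn (zeroSet f)ᶜ x}.ncard : ℝ) ≤ c * r) := by
  have hd0 : 0 < d := by omega
  have hdR : (0:ℝ) < d := by exact_mod_cast hd0
  set b : ℝ := (2:ℝ) ^ (1 / (d : ℝ)) with hb
  have hb1 : 1 < b := Real.one_lt_rpow (by norm_num) (by positivity)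
  set c₁ : ℝ := d * b / (b - 1) with hc₁
  have hc₁0 : 0 < c₁ := by
    have : 0 < b - 1 := by linarith
    positivity
  refine ⟨c₁ + (2 * c₁ + 1) ^ d, by positivity, fun P r hr1 hrP => ?_⟩
  obtain ⟨n, hn1, hn2⟩ := exists_nat_pow_near hr1 (one_lt_two)
  obtain ⟨f, hf0, hfd, ι, _, S, -, hS, hU⟩ := pp_partition hd0 P (n + 1)
  have hr0 : 0 < r := by linarith
  set ρ : ℝ := r ^ (1 / (d : ℝ)) with hρ
  have hρ1 : 1 ≤ ρ := Real.one_le_rpow hr1 (by positivity)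
  have hρd : ρ ^ d = r := by
    rw [hρ, one_div, Real.rpow_inv_natCast_pow hr0.le hd0.ne']
  have hpow : ∀ i : ℕ, ((2:ℝ) ^ i) ^ (1 / (d : ℝ)) = b ^ i := by
    intro i
    rw [hb, ← Real.rpow_natCast, ← Real.rpow_natCast, ← Real.rpow_mul (by norm_num), ← Real.rpow_mul (by norm_num), mul_comm]
  have hbn : b ^ n ≤ ρ := by
    rw [← hpow, hρ]
    exact Real.rpow_le_rpow (by positivity) hn1 (by positivity)
  have hdeg : (f.totalDegree : ℝ) ≤ c₁ * ρ := by
    refine hfd.trans ?_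
    rw [← Finset.mul_sum]
    simp only [hpow]
    rw [geom_sum_eq hb1.ne', hc₁, pow_succ]
    have hb0 : 0 < b - 1 := by linarith
    rw [mul_div_assoc, mul_assoc, div_mul_eq_mul_div]
    refine mul_le_mul_of_nonneg_left ?_ hdR.le
    refine div_le_div_of_nonneg_right ?_ hb0.le
    nlinarith
  have hbig : 0 < (2 * c₁ + 1) ^ d := by positivity
  refine ⟨f, hf0, ?_, ?_, ?_⟩
  · nlinarith
  · intro x hx
    obtain ⟨c, hc⟩ := hU (connectedComponentIn (zeroSet f)ᶜ x) isPreconnected_connectedComponentIn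
      (fun y hy => connectedComponentIn_subset _ _ hy)
    have h1 : ((P : Set (Fin d → ℝ)) ∩ connectedComponentIn (zeroSet f)ᶜ x).ncard ≤ (S c).card := by
      rw [← Set.ncard_coe_finset]
      exact Set.ncard_le_ncard (fun p hp => hc p hp.1 hp.2) (Finset.finite_toSet _)
    have h2 : ((2:ℝ) ^ (n + 1)) * (S c).card ≤ P.card := by exact_mod_cast hS c
    rw [le_div_iff₀ hr0]
    have h3 : (((P : Set (Fin d → ℝ)) ∩ connectedComponentIn (zeroSet f)ᶜ x).ncard : ℝ) ≤ (S c).card := by exact_mod_cast h1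
    have h4 : (0:ℝ) ≤ (S c).card := Nat.cast_nonneg _
    nlinarith
  · obtain ⟨h1, h2⟩ := pp_comps f
    refine ⟨h1, ?_⟩
    have h3 : (({S : Set (Fin d → ℝ) | ∃ x, x ∉ zeroSet f ∧
              S = connectedComponentIn (zeroSet f)ᶜ x}.ncard : ℝ)) ≤ (2 * (f.totalDegree : ℝ) + 1) ^ d := by
      exact_mod_cast h2
    refine h3.trans ?_
    have h4 : (2 * (f.totalDegree : ℝ) + 1) ^ d ≤ ((2 * c₁ + 1) * ρ) ^ d :=
      pow_le_pow_left₀ (by positivity) (by nlinarith) d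
    rw [mul_pow, hρd] at h4
    nlinarith
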